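/- arXiv:2102.06148 — 7 statements merged into one kernel-verified Lean document; each statement's English description precedes it below -/
import Mathlib

section
/- (ConStR-bisimulation invariance) Let R be a ConStR-bisimulation in a concurrent game model M. Then for every ConStR-formula θ and every pair of states s1, s2 of M with s1 R s2: M, s1 ⊨ θ if and only if M, s2 ⊨ θ. -/
/-- A concurrent game model over a set of agents `Agt` and atomic propositions `Prp`.
The local outcome function is represented by a total function `out`; the semantics
only ever uses its values on action profiles that are available at the given state. -/
structure CGM (Agt Prp : Type) where
  State : Type
  state_ne : Nonempty State
  Act : Agt → Type
  act_ne : ∀ a, Nonempty (Act a)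
  avail : State → ∀ a, Set (Act a)
  avail_ne : ∀ s a, (avail s a).Nonempty
  out : State → (∀ a, Act a) → State
  val : Prp → Set State

namespace CGM

variable {Agt Prp : Type}

/-- `σ` represents a joint action of coalition `C` available at state `s`
(only the values of `σ` on `C` are relevant). -/
def JointAt (M : CGM Agt Prp) (C : Set Agt) (s : M.State)
    (σ : ∀ a, M.Act a) : Prop :=
  ∀ a ∈ C, σ a ∈ M.avail s a

/-- `Out[s, σ_C]`: outcomes of available action profiles at `s` extending `σ` on `C`. -/
def Outs (M : CGM Agt Prp) (s : M.State) (C : Set Agt)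
    (σ : ∀ a, M.Act a) : Set M.State :=
  { u | ∃ τ : ∀ a, M.Act a, (∀ a, τ a ∈ M.avail s a) ∧
        (∀ a ∈ C, τ a = σ a) ∧ M.out s τ = u }

/-- `Out[s, σ_A ⊎ σ_B]`: outcomes of available action profiles at `s` agreeing
with `σA` on `A` and with `σB` on `B \ A`. -/
def OutsAB (M : CGM Agt Prp) (s : M.State) (A B : Set Agt)
    (σA σB : ∀ a, M.Act a) : Set M.State :=
  { u | ∃ τ : ∀ a, M.Act a, (∀ a, τ a ∈ M.avail s a) ∧
        (∀ a ∈ A, τ a = σA a) ∧ (∀ a ∈ B \ A, τ a = σB a) ∧ M.out s τ = u }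

end CGM

/-- Formulas of the logic ConStR. -/
inductive ConStR (Agt Prp : Type) : Type where
  | atom : Prp → ConStR Agt Prp
  | tru  : ConStR Agt Prp
  | neg  : ConStR Agt Prp → ConStR Agt Prp
  | conj : ConStR Agt Prp → ConStR Agt Prp → ConStR Agt Prp
  | oc   : Set Agt → Set Agt → ConStR Agt Prp → ConStR Agt Prp → ConStR Agt Prp
  | oa   : Set Agt → Set Agt → ConStR Agt Prp → ConStR Agt Prp → ConStR Agt Prp
  | ob   : Set Agt → Set Agt → ConStR Agt Prp → ConStR Agt Prp → ConStR Agt Prp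

namespace CGM

variable {Agt Prp : Type}

/-- Truth of a ConStR-formula at a state of a concurrent game model. -/
def sat (M : CGM Agt Prp) : ConStR Agt Prp → M.State → Prop
  | .atom p, s => s ∈ M.val p
  | .tru, _ => True
  | .neg φ, s => ¬ M.sat φ s
  | .conj φ ψ, s => M.sat φ s ∧ M.sat ψ s
  | .oc A B φ ψ, s =>
      ∃ σA, M.JointAt A s σA ∧ (∀ u ∈ M.Outs s A σA, M.sat φ u) ∧
        ∃ σB, M.JointAt B s σB ∧ ∀ u ∈ M.OutsAB s A B σA σB, M.sat ψ u
  | .oa A B φ ψ, s =>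
      ∃ σB, M.JointAt B s σB ∧ ∀ σA, M.JointAt A s σA →
        (∀ u ∈ M.Outs s A σA, M.sat φ u) →
        ∀ u ∈ M.OutsAB s A B σA σB, M.sat ψ u
  | .ob A B φ ψ, s =>
      ∀ σA, M.JointAt A s σA → (∀ u ∈ M.Outs s A σA, M.sat φ u) →
        ∃ σB, M.JointAt B s σB ∧ ∀ u ∈ M.OutsAB s A B σA σB, M.sat ψ u

end CGM

namespace CGM

variable {Agt Prp : Type}

/-- The Forth half of the Oc-bisimulation condition (the Back half is the same
condition with `s1` and `s2` swapped). -/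
def OcForth (M : CGM Agt Prp) (R : M.State → M.State → Prop)
    (A B : Set Agt) (s1 s2 : M.State) : Prop :=
  ∀ σA1, M.JointAt A s1 σA1 → ∃ σA2, M.JointAt A s2 σA2 ∧
    (∀ u2 ∈ M.Outs s2 A σA2, ∃ u1 ∈ M.Outs s1 A σA1, R u1 u2) ∧
    (∀ σB1, M.JointAt B s1 σB1 → ∃ σB2, M.JointAt B s2 σB2 ∧
      ∀ u2 ∈ M.OutsAB s2 A B σA2 σB2, ∃ u1 ∈ M.OutsAB s1 A B σA1 σB1, R u1 u2)

/-- The Forth half of the Oα-bisimulation condition. -/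
def OaForth (M : CGM Agt Prp) (R : M.State → M.State → Prop)
    (A B : Set Agt) (s1 s2 : M.State) : Prop :=
  ∀ σB1, M.JointAt B s1 σB1 → ∃ σB2, M.JointAt B s2 σB2 ∧
    ∀ σA2, M.JointAt A s2 σA2 → ∃ σA1, M.JointAt A s1 σA1 ∧
      (∀ u1 ∈ M.Outs s1 A σA1, ∃ u2 ∈ M.Outs s2 A σA2, R u1 u2) ∧
      (∀ u2 ∈ M.OutsAB s2 A B σA2 σB2, ∃ u1 ∈ M.OutsAB s1 A B σA1 σB1, R u1 u2)

/-- The Forth half of the Oβ-bisimulation condition. -/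
def ObForth (M : CGM Agt Prp) (R : M.State → M.State → Prop)
    (A B : Set Agt) (s1 s2 : M.State) : Prop :=
  ∀ σA1, M.JointAt A s1 σA1 → ∃ σA2, M.JointAt A s2 σA2 ∧
    (∀ u2 ∈ M.Outs s2 A σA2, ∃ u1 ∈ M.Outs s1 A σA1, R u1 u2) ∧
    (∀ σB2, M.JointAt B s2 σB2 → ∃ σB1, M.JointAt B s1 σB1 ∧
      ∀ u1 ∈ M.OutsAB s1 A B σA1 σB1, ∃ u2 ∈ M.OutsAB s2 A B σA2 σB2, R u1 u2)

/-- A ConStR-bisimulation in a concurrent game model. -/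
def ConStRBisim (M : CGM Agt Prp) (R : M.State → M.State → Prop) : Prop :=
  ∀ s1 s2, R s1 s2 →
    (∀ p : Prp, s1 ∈ M.val p ↔ s2 ∈ M.val p) ∧
    ∀ A B : Set Agt,
      M.OcForth R A B s1 s2 ∧ M.OcForth R A B s2 s1 ∧
      M.OaForth R A B s1 s2 ∧ M.OaForth R A B s2 s1 ∧
      M.ObForth R A B s1 s2 ∧ M.ObForth R A B s2 s1

end CGM

/-!
The proof is by induction on the formula. At each strategic operator the Forth condition transports
joint actions between related states, and its clauses on outcomes carry the goals along; the
polarities decide the directions. In `Oc` both goals are asserted, so both must be preserved along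
`R`. In `Oα` the goal `φ` of `A` is a premise, so it must be reflected. `Oβ` starts with a universal
quantifier over the actions of `A`, so its Forth condition carries truth backwards, from `s2` to
`s1`.
-/

/-- Truth of the predicate `P` passes from left to right along `R`. Passage from right to left is
expressed as preservation along `flip R`. -/
def PreservedAlong {α : Type*} (R : α → α → Prop) (P : α → Prop) : Prop :=
  ∀ ⦃u v⦄, R u v → P u → P v

namespace PreservedAlong

variable {α : Type*} {R : α → α → Prop} {P : α → Prop}

theorem of_iff (h : ∀ u v, R u v → (P u ↔ P v)) : PreservedAlong R P :=
  fun u v huv => (h u v huv).1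

theorem flip_of_iff (h : ∀ u v, R u v → (P u ↔ P v)) : PreservedAlong (flip R) P :=
  fun u v hvu => (h v u hvu).2

theorem forall_mem (hP : PreservedAlong R P) {U V : Set α} (hUV : ∀ v ∈ V, ∃ u ∈ U, R u v)
    (hU : ∀ u ∈ U, P u) : ∀ v ∈ V, P v := by
  intro v hv
  obtain ⟨u, hu, huv⟩ := hUV v hv
  exact hP huv (hU u hu)

end PreservedAlong

namespace CGM

variable {Agt Prp : Type} {M : CGM Agt Prp} {R : M.State → M.State → Prop} {A B : Set Agt}
  {φ ψ : ConStR Agt Prp} {s1 s2 : M.State}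

theorem OcForth.sat_oc (forth : M.OcForth R A B s1 s2) (hφ : PreservedAlong R (M.sat φ))
    (hψ : PreservedAlong R (M.sat ψ)) (h : M.sat (.oc A B φ ψ) s1) :
    M.sat (.oc A B φ ψ) s2 := by
  obtain ⟨σA1, hσA1, hA1, σB1, hσB1, hB1⟩ := h
  obtain ⟨σA2, hσA2, outA, forthB⟩ := forth σA1 hσA1
  obtain ⟨σB2, hσB2, outAB⟩ := forthB σB1 hσB1
  exact ⟨σA2, hσA2, hφ.forall_mem outA hA1, σB2, hσB2, hψ.forall_mem outAB hB1⟩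

theorem OaForth.sat_oa (forth : M.OaForth R A B s1 s2) (hφ : PreservedAlong (flip R) (M.sat φ))
    (hψ : PreservedAlong R (M.sat ψ)) (h : M.sat (.oa A B φ ψ) s1) :
    M.sat (.oa A B φ ψ) s2 := by
  obtain ⟨σB1, hσB1, hB1⟩ := h
  obtain ⟨σB2, hσB2, backA⟩ := forth σB1 hσB1
  refine ⟨σB2, hσB2, fun σA2 hσA2 hA2 => ?_⟩
  obtain ⟨σA1, hσA1, outA, outAB⟩ := backA σA2 hσA2
  have hA1 : ∀ u ∈ M.Outs s1 A σA1, M.sat φ u := hφ.forall_mem outA hA2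
  exact hψ.forall_mem outAB (hB1 σA1 hσA1 hA1)

theorem ObForth.sat_ob (forth : M.ObForth R A B s1 s2) (hφ : PreservedAlong R (M.sat φ))
    (hψ : PreservedAlong (flip R) (M.sat ψ)) (h : M.sat (.ob A B φ ψ) s2) :
    M.sat (.ob A B φ ψ) s1 := by
  intro σA1 hσA1 hA1
  obtain ⟨σA2, hσA2, outA, backB⟩ := forth σA1 hσA1
  have hA2 : ∀ u ∈ M.Outs s2 A σA2, M.sat φ u := hφ.forall_mem outA hA1
  obtain ⟨σB2, hσB2, hB2⟩ := h σA2 hσA2 hA2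
  obtain ⟨σB1, hσB1, outAB⟩ := backB σB2 hσB2
  exact ⟨σB1, hσB1, hψ.forall_mem outAB hB2⟩

end CGM

open PreservedAlong in
theorem constr_bisimulation_invariance_general {Agt Prp : Type} (M : CGM Agt Prp)
    (R : M.State → M.State → Prop) (hR : M.ConStRBisim R) (θ : ConStR Agt Prp)
    (s1 s2 : M.State) (h12 : R s1 s2) :
    M.sat θ s1 ↔ M.sat θ s2 := by
  induction θ generalizing s1 s2 with
  | atom p => exact (hR s1 s2 h12).1 p
  | tru => exact Iff.rfl
  | neg φ ih => exact not_congr (ih s1 s2 h12)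
  | conj φ ψ ihφ ihψ => exact and_congr (ihφ s1 s2 h12) (ihψ s1 s2 h12)
  | oc A B φ ψ ihφ ihψ =>
    obtain ⟨forth, back, -⟩ := (hR s1 s2 h12).2 A B
    exact ⟨forth.sat_oc (of_iff ihφ) (of_iff ihψ), back.sat_oc (of_iff ihφ) (of_iff ihψ)⟩
  | oa A B φ ψ ihφ ihψ =>
    obtain ⟨-, -, forth, back, -⟩ := (hR s1 s2 h12).2 A B
    exact ⟨forth.sat_oa (flip_of_iff ihφ) (of_iff ihψ), back.sat_oa (flip_of_iff ihφ) (of_iff ihψ)⟩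
  | ob A B φ ψ ihφ ihψ =>
    obtain ⟨-, -, -, -, forth, back⟩ := (hR s1 s2 h12).2 A B
    exact ⟨back.sat_ob (of_iff ihφ) (flip_of_iff ihψ), forth.sat_ob (of_iff ihφ) (flip_of_iff ihψ)⟩

/-- **ConStR-bisimulation invariance.** If `R` is a ConStR-bisimulation in a
concurrent game model `M`, then any two `R`-related states satisfy exactly
the same ConStR-formulas. -/
theorem constr_bisimulation_invariance {Agt Prp : Type} [Finite Agt]
    (M : CGM Agt Prp) (R : M.State → M.State → Prop)
    (hR : M.ConStRBisim R) (θ : ConStR Agt Prp) (s1 s2 : M.State)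
    (h12 : R s1 s2) :
    M.sat θ s1 ↔ M.sat θ s2 :=
  constr_bisimulation_invariance_general M R hR θ s1 s2 h12
end

section
/- (Oβ and Oα are semantically different) Let Agt contain two distinct agents a, b and let p, q be distinct atomic propositions. Then there exist a concurrent game model M over Agt and a state s0 of M such that M, s0 ⊨ Oβ({a};{b})(p▷q) but M, s0 ⊭ Oα({a};{b})(p▷q). Hence Oβ({a};{b})(p▷q) is not logically equivalent to Oα({a};{b})(p▷q). -/
/-!
In matching pennies, where `q` holds exactly when the two players choose the same side, a player who
sees the opponent's choice can always match it, whereas a player who moves first can always be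
mismatched. If every other atom holds everywhere, the antecedent `p` constrains nobody, so
`Oβ(A;B)(p▷q)` and `Oα(A;B)(p▷q)` differ exactly in who moves first.
-/

namespace CGM

variable {Agt Prp : Type}

/-- Matching pennies between agents `a` and `b`, as a one-shot game with winning condition `q`: the
outcome records whether their actions agree, `q` holds exactly where they did, and every other atom
holds everywhere. The remaining agents have the same two actions, with no influence. -/
def matchingPennies (a b : Agt) (q : Prp) : CGM Agt Prp where
  State := Bool
  state_ne := inferInstance
  Act := fun _ => Bool
  act_ne := fun _ => inferInstance
  avail := fun _ _ => Set.univ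
  avail_ne := fun _ _ => Set.univ_nonempty
  out := fun _ τ => τ a == τ b
  val := fun r => {u | r = q → u = true}

namespace matchingPennies

variable {a b : Agt} {p q : Prp} {A B : Set Agt}

theorem sat_atom_self_iff (u : (matchingPennies a b q).State) :
    (matchingPennies a b q).sat (.atom q) u ↔ u = true :=
  forall_prop_of_true rfl

theorem sat_atom_of_ne (hpq : p ≠ q) (u : (matchingPennies a b q).State) :
    (matchingPennies a b q).sat (.atom p) u :=
  fun h => absurd h hpq

theorem jointAt (C : Set Agt) (s : (matchingPennies a b q).State)
    (σ : Agt → Bool) : (matchingPennies a b q).JointAt C s σ :=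
  fun x _ => Set.mem_univ (σ x)

theorem mem_outsAB_iff (ha : a ∈ A) (hb : b ∈ B \ A) (s : (matchingPennies a b q).State)
    (σA σB : Agt → Bool) (u : Bool) :
    u ∈ (matchingPennies a b q).OutsAB s A B σA σB ↔ u = (σA a == σB b) := by
  classical
  constructor
  · rintro ⟨τ, -, hτA, hτB, rfl⟩
    exact congrArg₂ (fun x y : Bool => x == y) (hτA a ha) (hτB b hb)
  · rintro rfl
    refine ⟨A.piecewise σA σB, fun x => Set.mem_univ _,
      fun x hx => Set.piecewise_eq_of_mem A σA σB hx,
      fun x hx => Set.piecewise_eq_of_notMem A σA σB hx.2, ?_⟩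
    exact congrArg₂ (fun x y : Bool => x == y) (Set.piecewise_eq_of_mem A σA σB ha)
      (Set.piecewise_eq_of_notMem A σA σB hb.2)

theorem forall_outsAB_sat_atom_iff (ha : a ∈ A) (hb : b ∈ B \ A)
    (s : (matchingPennies a b q).State) (σA σB : Agt → Bool) :
    (∀ u ∈ (matchingPennies a b q).OutsAB s A B σA σB, (matchingPennies a b q).sat (.atom q) u) ↔
      σA a = σB b :=
  calc
    _ ↔ ∀ u : Bool, u = (σA a == σB b) → u = true :=
      forall_congr' fun u =>
        imp_congr (mem_outsAB_iff ha hb s σA σB u) (sat_atom_self_iff u)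
    _ ↔ σA a = σB b := forall_eq.trans beq_iff_eq

theorem sat_ob (ha : a ∈ A) (hb : b ∈ B \ A) (φ : ConStR Agt Prp)
    (s : (matchingPennies a b q).State) :
    (matchingPennies a b q).sat (.ob A B φ (.atom q)) s := by
  intro σA _ _
  let copy : Agt → Bool := fun _ => σA a
  exact ⟨copy, jointAt B s copy, (forall_outsAB_sat_atom_iff ha hb s σA copy).mpr rfl⟩

theorem not_sat_oa (ha : a ∈ A) (hb : b ∈ B \ A) {φ : ConStR Agt Prp}
    (hφ : ∀ u, (matchingPennies a b q).sat φ u) (s : (matchingPennies a b q).State) :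
    ¬ (matchingPennies a b q).sat (.oa A B φ (.atom q)) s := by
  rintro ⟨σB, -, hσB⟩
  let mismatch : Agt → Bool := fun _ => Bool.not (σB b)
  have hq := hσB mismatch (jointAt A s mismatch) fun u _ => hφ u
  exact Bool.not_ne_self (σB b) ((forall_outsAB_sat_atom_iff ha hb s mismatch σB).mp hq)

end matchingPennies

end CGM

theorem obeta_oalpha_semantically_different_general {Agt Prp : Type} {A B : Set Agt}
    (hA : A.Nonempty) (hBA : (B \ A).Nonempty) {p q : Prp} (hpq : p ≠ q) :
    (∃ (M : CGM Agt Prp) (s0 : M.State),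
        M.sat (.ob A B (.atom p) (.atom q)) s0 ∧
        ¬ M.sat (.oa A B (.atom p) (.atom q)) s0) ∧
    ¬ (∀ (M : CGM Agt Prp) (s : M.State),
        M.sat (.ob A B (.atom p) (.atom q)) s ↔
        M.sat (.oa A B (.atom p) (.atom q)) s) := by
  obtain ⟨a, ha⟩ := hA
  obtain ⟨b, hb⟩ := hBA
  let M : CGM Agt Prp := CGM.matchingPennies a b q
  obtain ⟨s0⟩ := M.state_ne
  have hβ : M.sat (.ob A B (.atom p) (.atom q)) s0 :=
    CGM.matchingPennies.sat_ob ha hb (.atom p) s0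
  have hα : ¬ M.sat (.oa A B (.atom p) (.atom q)) s0 :=
    CGM.matchingPennies.not_sat_oa ha hb (CGM.matchingPennies.sat_atom_of_ne hpq) s0
  exact ⟨⟨M, s0, hβ, hα⟩, fun hequiv => hα ((hequiv M s0).mp hβ)⟩

/-- **Oβ and Oα are semantically different.** There is a model and a state
satisfying `Oβ({a};{b})(p▷q)` but not `Oα({a};{b})(p▷q)`; hence the two
formulas are not logically equivalent. -/
theorem obeta_oalpha_semantically_different {Agt Prp : Type} [Finite Agt]
    (a b : Agt) (hab : a ≠ b) (p q : Prp) (hpq : p ≠ q) :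
    (∃ (M : CGM Agt Prp) (s0 : M.State),
        M.sat (.ob {a} {b} (.atom p) (.atom q)) s0 ∧
        ¬ M.sat (.oa {a} {b} (.atom p) (.atom q)) s0) ∧
    ¬ (∀ (M : CGM Agt Prp) (s : M.State),
        M.sat (.ob {a} {b} (.atom p) (.atom q)) s ↔
        M.sat (.oa {a} {b} (.atom p) (.atom q)) s) :=
  have hba : b ∈ ({b} \ {a} : Set Agt) := ⟨rfl, hab.symm⟩
  obeta_oalpha_semantically_different_general (Set.singleton_nonempty a) ⟨b, hba⟩ hpq
end

section
/- (Oc is not definable in Coalition Logic) Let Agt contain three distinct agents a, b, c and let p, q be distinct atomic propositions. Then there is no CL-formula χ such that for every concurrent game model M over Agt and every state s of M: M, s ⊨ χ if and only if M, s ⊨ Oc({a};{b})(p▷q). In particular, there exist a concurrent game model and two CL-bisimilar states of it such that Oc({a};{b})(p▷q) is true at one and false at the other. -/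
/-- Formulas of Coalition Logic CL. -/
inductive CLForm (Agt Prp : Type) : Type where
  | atom : Prp → CLForm Agt Prp
  | tru  : CLForm Agt Prp
  | neg  : CLForm Agt Prp → CLForm Agt Prp
  | conj : CLForm Agt Prp → CLForm Agt Prp → CLForm Agt Prp
  | coal : Set Agt → CLForm Agt Prp → CLForm Agt Prp

namespace CGM

variable {Agt Prp : Type}

/-- Truth of a CL-formula at a state of a concurrent game model. -/
def satCL (M : CGM Agt Prp) : CLForm Agt Prp → M.State → Prop
  | .atom p, s => s ∈ M.val p
  | .tru, _ => True
  | .neg φ, s => ¬ M.satCL φ s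
  | .conj φ ψ, s => M.satCL φ s ∧ M.satCL ψ s
  | .coal C φ, s => ∃ σ, M.JointAt C s σ ∧ ∀ u ∈ M.Outs s C σ, M.satCL φ u

/-- A CL-bisimulation in a concurrent game model. -/
def CLBisim (M : CGM Agt Prp) (R : M.State → M.State → Prop) : Prop :=
  ∀ s1 s2, R s1 s2 →
    (∀ p : Prp, s1 ∈ M.val p ↔ s2 ∈ M.val p) ∧
    ∀ C : Set Agt,
      (∀ σ1, M.JointAt C s1 σ1 → ∃ σ2, M.JointAt C s2 σ2 ∧
        ∀ u2 ∈ M.Outs s2 C σ2, ∃ u1 ∈ M.Outs s1 C σ1, R u1 u2) ∧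
      (∀ σ2, M.JointAt C s2 σ2 → ∃ σ1, M.JointAt C s1 σ1 ∧
        ∀ u1 ∈ M.Outs s1 C σ1, ∃ u2 ∈ M.Outs s2 C σ2, R u2 u1)

end CGM

/-!
CL-formulas only see which sets of outcomes each coalition can enforce, so they cannot separate
two one-shot games with the same effectivity function. Let agent `a` choose the row and agent `b`
the column of one of the matrices

    {p,q}  {p}          {p,q}   ∅
     {p}   {p}           {p}   {p}
      ∅     ∅             ∅     ∅

whose entries are the sets of atoms true at the outcome. In both games `a` can enforce exactly the
sets of outcomes containing `{p}` or `∅`, and `b` exactly those containing both `{p}` and `∅`. But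
only on the left does the first row, the only one in which `b` can reach `q`, guarantee `p`.
-/

namespace CGM

variable {Agt Prp : Type} {M : CGM Agt Prp} {R : M.State → M.State → Prop}

theorem CLBisim.satCL_iff (hR : M.CLBisim R) (χ : CLForm Agt Prp) {s t : M.State} (hst : R s t) :
    M.satCL χ s ↔ M.satCL χ t := by
  induction χ generalizing s t with
  | atom r => exact (hR s t hst).1 r
  | tru => exact Iff.rfl
  | neg φ ih => exact not_congr (ih hst)
  | conj φ ψ ihφ ihψ => exact and_congr (ihφ hst) (ihψ hst)
  | coal C φ ih =>
    obtain ⟨forth, back⟩ := (hR s t hst).2 C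
    constructor
    · rintro ⟨σ, hσ, hφ⟩
      obtain ⟨σ', hσ', hsim⟩ := forth σ hσ
      refine ⟨σ', hσ', fun u' hu' => ?_⟩
      obtain ⟨u, hu, huu'⟩ := hsim u' hu'
      exact (ih huu').1 (hφ u hu)
    · rintro ⟨σ', hσ', hφ⟩
      obtain ⟨σ, hσ, hsim⟩ := back σ' hσ'
      refine ⟨σ, hσ, fun u hu => ?_⟩
      obtain ⟨u', hu', huu'⟩ := hsim u hu
      exact (ih huu').1 (hφ u' hu')

theorem CLBisim.not_definable (hR : M.CLBisim R) {s t : M.State} (hst : R s t)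
    {φ : ConStR Agt Prp} (hs : M.sat φ s) (ht : ¬ M.sat φ t) :
    ¬ ∃ χ : CLForm Agt Prp, ∀ (N : CGM Agt Prp) (u : N.State), N.satCL χ u ↔ N.sat φ u :=
  fun ⟨χ, hχ⟩ => ht ((hχ M t).1 ((hR.satCL_iff χ hst).1 ((hχ M s).2 hs)))

theorem CLBisim.of_outs_subset (hrefl : ∀ s, R s s) (hsymm : ∀ s t, R s t → R t s)
    (hval : ∀ s t, R s t → ∀ r, s ∈ M.val r ↔ t ∈ M.val r)
    (houts : ∀ s t, R s t → ∀ C σ, M.JointAt C s σ →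
      ∃ σ', M.JointAt C t σ' ∧ M.Outs t C σ' ⊆ M.Outs s C σ) :
    M.CLBisim R := by
  refine fun s t hst => ⟨hval s t hst, fun C => ⟨fun σ hσ => ?_, fun σ hσ => ?_⟩⟩
  · obtain ⟨σ', hσ', hsub⟩ := houts s t hst C σ hσ
    exact ⟨σ', hσ', fun u hu => ⟨u, hsub hu, hrefl u⟩⟩
  · obtain ⟨σ', hσ', hsub⟩ := houts t s (hsymm s t hst) C σ hσ
    exact ⟨σ', hσ', fun u hu => ⟨u, hsub hu, hrefl u⟩⟩

end CGM

/-- A strategic game form with outcomes in `Ω`, in which every agent chooses an action in `α`. -/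
abbrev GameForm (Agt α Ω : Type) : Type := (Agt → α) → Ω

namespace GameForm

variable {Agt α Ω : Type}

/-- The effectivity function of a game form: `G.effectivity C` is the family of the sets of outcomes
that the coalition `C` can enforce. As in `CGM.JointAt`, a joint action of `C` is represented by a
full profile, of which only the values on `C` matter. -/
def effectivity (G : GameForm Agt α Ω) (C : Set Agt) : Set (Set Ω) :=
  {X | ∃ σ : Agt → α, ∀ τ, Set.EqOn τ σ C → G τ ∈ X}

/-- The game form in which `a` chooses the row and `b` the column of the matrix `g`, the other
agents being dummies. -/
def ofMatrix (a b : Agt) (g : Matrix α α Ω) : GameForm Agt α Ω := fun τ => g (τ a) (τ b)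

theorem exists_profile_of_ne {a b : Agt} (hab : a ≠ b) (σ : Agt → α) (x y : α) :
    ∃ τ : Agt → α, τ a = x ∧ τ b = y ∧ ∀ d, d ≠ a → d ≠ b → τ d = σ d := by
  classical
  refine ⟨Function.update (Function.update σ a x) b y, ?_, ?_, fun d hda hdb => ?_⟩
  · rw [Function.update_of_ne hab, Function.update_self]
  · exact Function.update_self ..
  · rw [Function.update_of_ne hdb, Function.update_of_ne hda]

theorem mem_effectivity_ofMatrix {a b : Agt} (hab : a ≠ b) (g : Matrix α α Ω) (C : Set Agt)
    (X : Set Ω) :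
    X ∈ (ofMatrix a b g).effectivity C ↔
      ∃ x y, ∀ x', (a ∈ C → x' = x) → ∀ y', (b ∈ C → y' = y) → g x' y' ∈ X := by
  constructor
  · rintro ⟨σ, hσ⟩
    refine ⟨σ a, σ b, fun x' hx y' hy => ?_⟩
    obtain ⟨τ, rfl, rfl, hτ⟩ := exists_profile_of_ne hab σ x' y'
    refine hσ τ fun d hd => ?_
    by_cases hda : d = a
    · subst hda; exact hx hd
    by_cases hdb : d = b
    · subst hdb; exact hy hd
    exact hτ d hda hdb
  · rintro ⟨x, y, hxy⟩
    obtain ⟨σ, rfl, rfl, -⟩ := exists_profile_of_ne hab (fun _ => x) x y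
    exact ⟨σ, fun τ hτ => hxy _ (fun ha => hτ ha) _ fun hb => hτ hb⟩

end GameForm

/-- The model in which every game form with outcomes in `Set Prp` is a state, at which it is played
once. Its outcomes are absorbing states, each being the set of atoms true there; no atom is true at
a game form. -/
def oneShotModel (Agt α Prp : Type) [Nonempty α] : CGM Agt Prp where
  State := GameForm Agt α (Set Prp) ⊕ Set Prp
  state_ne := inferInstance
  Act _ := α
  act_ne _ := inferInstance
  avail _ _ := Set.univ
  avail_ne _ _ := Set.univ_nonempty
  out s τ := s.elim (fun G => .inr (G τ)) .inr
  val r := {s | s.elim (fun _ => False) (r ∈ ·)}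

namespace oneShotModel

variable {Agt α Prp : Type} [Nonempty α]

/-- The relation between states of `oneShotModel` that have the same effectivity function (game
forms) or are equal (outcomes). -/
def EffectivityRel :
    (oneShotModel Agt α Prp).State → (oneShotModel Agt α Prp).State → Prop :=
  Sum.LiftRel (fun G H => G.effectivity = H.effectivity) Eq

theorem outs_inl_subset_of_effectivity_eq {G H : GameForm Agt α (Set Prp)}
    (hGH : G.effectivity = H.effectivity) (C : Set Agt) (σ : Agt → α) :
    ∃ σ' : Agt → α, (oneShotModel Agt α Prp).Outs (.inl H) C σ' ⊆
      (oneShotModel Agt α Prp).Outs (.inl G) C σ := by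
  have hG : G '' {τ | Set.EqOn τ σ C} ∈ G.effectivity C :=
    ⟨σ, fun τ hτ => Set.mem_image_of_mem G hτ⟩
  rw [hGH] at hG
  obtain ⟨σ', hσ'⟩ := hG
  refine ⟨σ', ?_⟩
  rintro _ ⟨τ', -, hτ', rfl⟩
  obtain ⟨τ, hτ, hGτ⟩ := hσ' τ' hτ'
  exact ⟨τ, fun _ => Set.mem_univ _, hτ, congrArg Sum.inr hGτ⟩

theorem clBisim_effectivityRel : (oneShotModel Agt α Prp).CLBisim EffectivityRel := by
  refine .of_outs_subset ?_ ?_ ?_ ?_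
  · rintro (G | v)
    exacts [.inl rfl, .inr rfl]
  · rintro _ _ (hGH | hvw)
    exacts [.inl hGH.symm, .inr hvw.symm]
  · rintro _ _ (_ | rfl) r
    exacts [Iff.rfl, Iff.rfl]
  · rintro _ _ (hGH | rfl) C σ hσ
    · obtain ⟨σ', hσ'⟩ := outs_inl_subset_of_effectivity_eq hGH C σ
      exact ⟨σ', fun _ _ => Set.mem_univ _, hσ'⟩
    · exact ⟨σ, hσ, subset_rfl⟩

theorem sat_oc_ofMatrix_iff {a b : Agt} (hab : a ≠ b) (g : Matrix α α (Set Prp)) (p q : Prp) :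
    (oneShotModel Agt α Prp).sat (.oc {a} {b} (.atom p) (.atom q))
        (.inl (GameForm.ofMatrix a b g)) ↔
      ∃ x, (∀ y, p ∈ g x y) ∧ ∃ y, q ∈ g x y := by
  constructor
  · rintro ⟨σ, -, hp, σ', -, hq⟩
    refine ⟨σ a, fun y => ?_, σ' b, ?_⟩
    · obtain ⟨τ, hτa, rfl, -⟩ := GameForm.exists_profile_of_ne hab σ (σ a) y
      rw [← hτa]
      exact hp (.inr (g (τ a) (τ b)))
        ⟨τ, fun _ => Set.mem_univ _, by rintro _ rfl; exact hτa, rfl⟩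
    · obtain ⟨τ, hτa, hτb, -⟩ := GameForm.exists_profile_of_ne hab σ (σ a) (σ' b)
      rw [← hτa, ← hτb]
      exact hq (.inr (g (τ a) (τ b))) ⟨τ, fun _ => Set.mem_univ _, by rintro _ rfl; exact hτa,
        by rintro _ ⟨rfl, -⟩; exact hτb, rfl⟩
  · rintro ⟨x, hp, y, hq⟩
    refine ⟨fun _ => x, fun _ _ => Set.mem_univ _, ?_, fun _ => y, fun _ _ => Set.mem_univ _, ?_⟩
    · rintro _ ⟨τ, -, hτ, rfl⟩
      have hτa : τ a = x := hτ a rfl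
      exact (hτa ▸ hp (τ b) : p ∈ g (τ a) (τ b))
    · rintro _ ⟨τ, -, hτ, hτ', rfl⟩
      have hτa : τ a = x := hτ a rfl
      have hτb : τ b = y := hτ' b ⟨rfl, hab.symm⟩
      exact (hτa ▸ hτb ▸ hq : q ∈ g (τ a) (τ b))

end oneShotModel

section

variable {Agt Prp : Type}

/-- The common shape of the two game matrices above: `v = {p}` gives the left one and `v = ∅` the
right one. The second column is doubled so that both players have the same actions. -/
def ocMatrix (p q : Prp) (v : Set Prp) : Matrix (Fin 3) (Fin 3) (Set Prp) :=
  !![{p, q}, v, v;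
     {p}, {p}, {p};
     ∅, ∅, ∅]

theorem mem_effectivity_ocMatrix {a b : Agt} (hab : a ≠ b) {p : Prp} (q : Prp) {v : Set Prp}
    (hv : v = {p} ∨ v = ∅) (C : Set Agt) (X : Set (Set Prp)) :
    X ∈ (GameForm.ofMatrix a b (ocMatrix p q v)).effectivity C ↔
      (a ∈ C ∧ ({p} ∈ X ∨ ∅ ∈ X)) ∨ ({p} ∈ X ∧ ∅ ∈ X ∧ (b ∈ C ∨ {p, q} ∈ X)) ∨
        (a ∈ C ∧ b ∈ C ∧ {p, q} ∈ X) := by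
  rw [GameForm.mem_effectivity_ofMatrix hab]
  by_cases ha : a ∈ C <;> by_cases hb : b ∈ C <;>
    simp only [ha, hb, forall_const, IsEmpty.forall_iff, forall_eq, exists_const, ocMatrix,
      Matrix.of_apply, Matrix.cons_val', Matrix.cons_val_fin_one, Matrix.cons_val_zero,
      Matrix.cons_val_succ, Fin.exists_fin_succ, Fin.forall_fin_succ,
      true_and, true_or, and_true, false_and, or_false, false_or, and_self, or_self] <;>
    rcases hv with rfl | rfl <;> tauto

theorem sat_oc_ocMatrix_iff {a b : Agt} (hab : a ≠ b) {p q : Prp} (hpq : p ≠ q) (v : Set Prp) :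
    (oneShotModel Agt (Fin 3) Prp).sat (.oc {a} {b} (.atom p) (.atom q))
      (.inl (GameForm.ofMatrix a b (ocMatrix p q v))) ↔ p ∈ v := by
  rw [oneShotModel.sat_oc_ofMatrix_iff hab]
  simp [ocMatrix, Fin.exists_fin_succ, Fin.forall_fin_succ, hpq.symm]

end

theorem oc_not_definable_in_CL_general {Agt Prp : Type} (a b : Agt) (hab : a ≠ b)
    (p q : Prp) (hpq : p ≠ q) :
    (¬ ∃ χ : CLForm Agt Prp, ∀ (M : CGM Agt Prp) (s : M.State),
        M.satCL χ s ↔ M.sat (.oc {a} {b} (.atom p) (.atom q)) s) ∧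
    (∃ (M : CGM Agt Prp) (R : M.State → M.State → Prop) (s1 s2 : M.State),
        M.CLBisim R ∧ R s1 s2 ∧
        M.sat (.oc {a} {b} (.atom p) (.atom q)) s1 ∧
        ¬ M.sat (.oc {a} {b} (.atom p) (.atom q)) s2) := by
  have hbisim := oneShotModel.clBisim_effectivityRel (Agt := Agt) (α := Fin 3) (Prp := Prp)
  have hrel : oneShotModel.EffectivityRel
      (.inl (GameForm.ofMatrix a b (ocMatrix p q {p})))
      (.inl (GameForm.ofMatrix a b (ocMatrix p q ∅))) := by
    refine .inl (funext fun C => Set.ext fun X => ?_)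
    rw [mem_effectivity_ocMatrix hab q (.inl rfl), mem_effectivity_ocMatrix hab q (.inr rfl)]
  have htrue := (sat_oc_ocMatrix_iff hab hpq {p}).2 rfl
  have hfalse := mt (sat_oc_ocMatrix_iff hab hpq ∅).1 (Set.notMem_empty p)
  exact ⟨hbisim.not_definable hrel htrue hfalse, _, _, _, _, hbisim, hrel, htrue, hfalse⟩

/-- **Oc is not definable in Coalition Logic.** No CL-formula is equivalent to
`Oc({a};{b})(p▷q)` over all concurrent game models; in particular there are
CL-bisimilar states distinguished by that formula. -/
theorem oc_not_definable_in_CL {Agt Prp : Type} [Finite Agt]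
    (a b c : Agt) (hab : a ≠ b) (hac : a ≠ c) (hbc : b ≠ c)
    (p q : Prp) (hpq : p ≠ q) :
    (¬ ∃ χ : CLForm Agt Prp, ∀ (M : CGM Agt Prp) (s : M.State),
        M.satCL χ s ↔ M.sat (.oc {a} {b} (.atom p) (.atom q)) s) ∧
    (∃ (M : CGM Agt Prp) (R : M.State → M.State → Prop) (s1 s2 : M.State),
        M.CLBisim R ∧ R s1 s2 ∧
        M.sat (.oc {a} {b} (.atom p) (.atom q)) s1 ∧
        ¬ M.sat (.oc {a} {b} (.atom p) (.atom q)) s2) :=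
  oc_not_definable_in_CL_general a b hab p q hpq
end

section
/- (Validity of anti-monotonicity for Oα) For all coalitions A, B, C ⊆ Agt and all ConStR-formulas φ, ψ, the formula Oα(A∪C;B)(φ▷ψ) → Oα(A;B)(φ▷ψ) is valid: for every concurrent game model M and every state s, if M, s ⊨ Oα(A∪C;B)(φ▷ψ) then M, s ⊨ Oα(A;B)(φ▷ψ). -/
/-! Given an outcome of `σ_A ⊎ σ_B`, let the larger coalition respond with the whole action profile
that produced it. That profile extends `σ_A`, so its outcomes still satisfy `φ`, and the given
outcome remains an outcome of its combination with `σ_B`. -/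

namespace CGM

variable {Agt Prp : Type} {M : CGM Agt Prp} {s : M.State} {A A' B : Set Agt}

theorem outs_subset_outs {σ σ' : ∀ a, M.Act a} (hA : A ⊆ A') (hσ : ∀ a ∈ A, σ' a = σ a) :
    M.Outs s A' σ' ⊆ M.Outs s A σ := by
  rintro _ ⟨τ, hτ, hτσ', rfl⟩
  exact ⟨τ, hτ, fun a ha => (hτσ' a (hA ha)).trans (hσ a ha), rfl⟩

theorem exists_jointAt_extension_of_mem_outsAB {σA σB : ∀ a, M.Act a} {u : M.State}
    (hA : A ⊆ A') (hu : u ∈ M.OutsAB s A B σA σB) :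
    ∃ τ, M.JointAt A' s τ ∧ (∀ a ∈ A, τ a = σA a) ∧ u ∈ M.OutsAB s A' B τ σB := by
  obtain ⟨τ, hτ, hτA, hτB, rfl⟩ := hu
  exact ⟨τ, fun a _ => hτ a, hτA, τ, hτ, fun _ _ => rfl,
    fun a ha => hτB a (Set.sdiff_subset_sdiff_right hA ha), rfl⟩

end CGM

theorem oalpha_antimonotonicity_valid_general {Agt Prp : Type} {A A' : Set Agt} (hA : A ⊆ A')
    (B : Set Agt) (φ ψ : ConStR Agt Prp) (M : CGM Agt Prp) (s : M.State)
    (h : M.sat (.oa A' B φ ψ) s) :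
    M.sat (.oa A B φ ψ) s := by
  simp only [CGM.sat] at h ⊢
  obtain ⟨σB, hσB, hψ⟩ := h
  refine ⟨σB, hσB, fun σA _ hφ u hu => ?_⟩
  obtain ⟨τ, hτ, hτA, huτ⟩ := CGM.exists_jointAt_extension_of_mem_outsAB hA hu
  have hφτ : ∀ v ∈ M.Outs s A' τ, M.sat φ v :=
    fun v hv => hφ v (CGM.outs_subset_outs hA hτA hv)
  exact hψ τ hτ hφτ u huτ

/-- **Validity of anti-monotonicity for Oα:**
`Oα(A∪C;B)(φ▷ψ) → Oα(A;B)(φ▷ψ)` is valid. -/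
theorem oalpha_antimonotonicity_valid {Agt Prp : Type} [Finite Agt]
    (A B C : Set Agt) (φ ψ : ConStR Agt Prp)
    (M : CGM Agt Prp) (s : M.State)
    (h : M.sat (.oa (A ∪ C) B φ ψ) s) :
    M.sat (.oa A B φ ψ) s :=
  oalpha_antimonotonicity_valid_general Set.subset_union_left B φ ψ M s h
end

section
/- (Soundness of axiom ConStR 2) For all coalitions A, B ⊆ Agt and all ConStR-formulas φ, ψ, the formula (Oβ(∅;A)(⊤▷φ) ∧ Oβ(A;B)(φ▷ψ)) → Oc(A;B)(φ▷ψ) is valid: at every state s of every concurrent game model M, if M, s ⊨ Oβ(∅;A)(⊤▷φ) and M, s ⊨ Oβ(A;B)(φ▷ψ), then M, s ⊨ Oc(A;B)(φ▷ψ). -/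
namespace CGM

variable {Agt Prp : Type} {M : CGM Agt Prp} {s : M.State}

theorem jointAt_empty (σ : ∀ a, M.Act a) : M.JointAt ∅ s σ :=
  fun _ ha => ha.elim

theorem outsAB_empty_left (B : Set Agt) (σA σB : ∀ a, M.Act a) :
    M.OutsAB s ∅ B σA σB = M.Outs s B σB := by
  simp only [OutsAB, Outs, Set.sdiff_empty, Set.mem_empty_iff_false, false_imp_iff, implies_true,
    true_and]

/-- The effectivity relation of coalition logic: `C` has a joint action at `s` all of whose
outcomes lie in `X`. It is stated for a set of states, so that it applies to the truth set of
any formula. -/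
def CanForce (M : CGM Agt Prp) (C : Set Agt) (s : M.State) (X : Set M.State) : Prop :=
  ∃ σ, M.JointAt C s σ ∧ M.Outs s C σ ⊆ X

theorem sat_ob_empty_tru_iff {C : Set Agt} {φ : ConStR Agt Prp} :
    M.sat (.ob ∅ C .tru φ) s ↔ M.CanForce C s {u | M.sat φ u} := by
  simp only [sat, outsAB_empty_left]
  constructor
  · intro h
    exact h (fun a => (M.act_ne a).some) (jointAt_empty _) fun _ _ => trivial
  · intro hforce _ _ _
    exact hforce

theorem CanForce.sat_oc_of_sat_ob {A B : Set Agt} {φ ψ : ConStR Agt Prp}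
    (hforce : M.CanForce A s {u | M.sat φ u}) (hob : M.sat (.ob A B φ ψ) s) :
    M.sat (.oc A B φ ψ) s := by
  simp only [sat] at hob ⊢
  obtain ⟨σA, hσA, hφ⟩ := hforce
  exact ⟨σA, hσA, hφ, hob σA hσA hφ⟩

end CGM

theorem constr2_sound_general {Agt Prp : Type} (A B : Set Agt) (φ ψ : ConStR Agt Prp)
    (M : CGM Agt Prp) (s : M.State) (hability : M.sat (.ob (∅ : Set Agt) A .tru φ) s)
    (hob : M.sat (.ob A B φ ψ) s) :
    M.sat (.oc A B φ ψ) s :=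
  (CGM.sat_ob_empty_tru_iff.mp hability).sat_oc_of_sat_ob hob

/-- **Soundness of axiom ConStR 2:**
`(Oβ(∅;A)(⊤▷φ) ∧ Oβ(A;B)(φ▷ψ)) → Oc(A;B)(φ▷ψ)` is valid. -/
theorem constr2_sound {Agt Prp : Type} [Finite Agt]
    (A B : Set Agt) (φ ψ : ConStR Agt Prp)
    (M : CGM Agt Prp) (s : M.State)
    (h1 : M.sat (.ob (∅ : Set Agt) A .tru φ) s)
    (h2 : M.sat (.ob A B φ ψ) s) :
    M.sat (.oc A B φ ψ) s :=
  constr2_sound_general A B φ ψ M s h1 h2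
end

section
/- (Soundness of axiom Oc 1: monotonicity of Oc with respect to the first coalition) For all coalitions A, B, C ⊆ Agt and all ConStR-formulas φ, ψ, the formula Oc(A;B)(φ▷ψ) → Oc(A∪C;B)(φ▷ψ) is valid. -/
namespace CGM

variable {Agt Prp : Type} {M : CGM Agt Prp} {s : M.State} {A B C D : Set Agt}
  {σ τ σA σB : ∀ a, M.Act a}

theorem JointAt.piecewise [DecidablePred (· ∈ A)] (hA : M.JointAt A s σA)
    (hB : M.JointAt B s σB) : M.JointAt (A ∪ B) s (A.piecewise σA σB) := by
  intro a ha
  by_cases haA : a ∈ A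
  · simpa only [Set.piecewise_eq_of_mem _ _ _ haA] using hA a haA
  · simpa only [Set.piecewise_eq_of_notMem _ _ _ haA] using hB a (ha.resolve_left haA)

theorem JointAt.exists_profile_extending (hσ : M.JointAt C s σ) :
    ∃ τ : ∀ a, M.Act a, (∀ a, τ a ∈ M.avail s a) ∧ ∀ a ∈ C, τ a = σ a := by
  classical
  choose ρ hρ using M.avail_ne s
  have hext := hσ.piecewise (B := Set.univ) fun a _ => hρ a
  exact ⟨C.piecewise σ ρ, fun a => hext a (Or.inr trivial),
    fun _ ha => Set.piecewise_eq_of_mem _ _ _ ha⟩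

theorem outs_subset_outs_s10 (hCD : C ⊆ D) (hτσ : ∀ a ∈ C, τ a = σ a) :
    M.Outs s D τ ⊆ M.Outs s C σ := by
  rintro _ ⟨ρ, hρ, hρτ, rfl⟩
  exact ⟨ρ, hρ, fun a ha => (hρτ a (hCD ha)).trans (hτσ a ha), rfl⟩

theorem outsAB_eq_outs_piecewise [DecidablePred (· ∈ A)] :
    M.OutsAB s A B σA σB = M.Outs s (A ∪ B) (A.piecewise σA σB) := by
  have agree_iff (τ : ∀ a, M.Act a) :
      (∀ a ∈ A ∪ B, τ a = A.piecewise σA σB a) ↔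
        (∀ a ∈ A, τ a = σA a) ∧ ∀ a ∈ B \ A, τ a = σB a := by
    simp only [Set.piecewise, Set.mem_union, Set.mem_sdiff]
    grind
  simp only [OutsAB, Outs, agree_iff, and_assoc]

end CGM

theorem oc1_sound_general {Agt Prp : Type} {A A' : Set Agt} (hA : A ⊆ A') (B : Set Agt)
    (φ ψ : ConStR Agt Prp) (M : CGM Agt Prp) (s : M.State)
    (h : M.sat (.oc A B φ ψ) s) :
    M.sat (.oc A' B φ ψ) s := by
  classical
  obtain ⟨σA, hσA, hφ, σB, hσB, hψ⟩ := h
  -- Both coalitions play their part of one full profile `τ` extending `σA ⊎ σB`;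
  -- enlarging the first coalition then only shrinks the two sets of outcomes.
  obtain ⟨τ, hτ, hτAB⟩ := (hσA.piecewise hσB).exists_profile_extending
  have hτA : ∀ a ∈ A, τ a = σA a := fun a ha =>
    (hτAB a (Or.inl ha)).trans (Set.piecewise_eq_of_mem _ _ _ ha)
  have outs_subset : M.Outs s A' τ ⊆ M.Outs s A σA := CGM.outs_subset_outs_s10 hA hτA
  have outsAB_subset : M.OutsAB s A' B τ τ ⊆ M.OutsAB s A B σA σB := by
    rw [CGM.outsAB_eq_outs_piecewise, CGM.outsAB_eq_outs_piecewise, Set.piecewise_same]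
    exact CGM.outs_subset_outs_s10 (Set.union_subset_union_left B hA) hτAB
  exact ⟨τ, fun a _ => hτ a, fun u hu => hφ u (outs_subset hu),
    τ, fun a _ => hτ a, fun u hu => hψ u (outsAB_subset hu)⟩

/-- **Soundness of axiom Oc 1 (monotonicity w.r.t. the first coalition):**
`Oc(A;B)(φ▷ψ) → Oc(A∪C;B)(φ▷ψ)` is valid. -/
theorem oc1_sound {Agt Prp : Type} [Finite Agt]
    (A B C : Set Agt) (φ ψ : ConStR Agt Prp)
    (M : CGM Agt Prp) (s : M.State)
    (h : M.sat (.oc A B φ ψ) s) :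
    M.sat (.oc (A ∪ C) B φ ψ) s :=
  oc1_sound_general Set.subset_union_left B φ ψ M s h
end

section
/- (Soundness of axiom Oc 3) For all coalitions A, B ⊆ Agt and all ConStR-formulas φ, ψ, the formula Oc(A;B)(φ▷ψ) → Oc(A∪B;∅)((φ∧ψ)▷⊤) is valid. -/
theorem forall_mem_union_eq_piecewise_iff {ι : Type*} {β : ι → Sort*} {s t : Set ι}
    [∀ i, Decidable (i ∈ s)] {f g h : ∀ i, β i} :
    (∀ i ∈ s ∪ t, h i = s.piecewise f g i) ↔
      (∀ i ∈ s, h i = f i) ∧ ∀ i ∈ t \ s, h i = g i := by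
  rw [← Set.union_sdiff_self]
  simp only [Set.mem_union, or_imp, forall_and]
  refine and_congr (forall₂_congr fun i hi => ?_) (forall₂_congr fun i hi => ?_)
  · rw [Set.piecewise_eq_of_mem s f g hi]
  · rw [Set.piecewise_eq_of_notMem s f g hi.2]

namespace CGM

variable {Agt Prp : Type} {M : CGM Agt Prp} {s : M.State} {A B : Set Agt} {σA σB : ∀ a, M.Act a}

theorem exists_jointAt (M : CGM Agt Prp) (C : Set Agt) (s : M.State) : ∃ σ, M.JointAt C s σ :=
  ⟨fun a => (M.avail_ne s a).some, fun a _ => (M.avail_ne s a).some_mem⟩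

/-- `A.piecewise σA σB` represents the joint action `σ_A ⊎ σ_B`. -/
theorem JointAt.union_piecewise [∀ a, Decidable (a ∈ A)] (hA : M.JointAt A s σA)
    (hB : M.JointAt (B \ A) s σB) : M.JointAt (A ∪ B) s (A.piecewise σA σB) := by
  intro a ha
  by_cases haA : a ∈ A
  · simpa only [Set.piecewise_eq_of_mem A σA σB haA] using hA a haA
  · simpa only [Set.piecewise_eq_of_notMem A σA σB haA] using hB a ⟨ha.resolve_left haA, haA⟩

theorem outsAB_subset_outs : M.OutsAB s A B σA σB ⊆ M.Outs s A σA :=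
  fun _ ⟨τ, hτ, hτA, _, hu⟩ => ⟨τ, hτ, hτA, hu⟩

theorem outs_union_piecewise [∀ a, Decidable (a ∈ A)] :
    M.Outs s (A ∪ B) (A.piecewise σA σB) = M.OutsAB s A B σA σB := by
  simp only [Outs, OutsAB, forall_mem_union_eq_piecewise_iff, and_assoc]

theorem sat_oc_tru {φ : ConStR Agt Prp} :
    M.sat (.oc A B φ .tru) s ↔ ∃ σ, M.JointAt A s σ ∧ ∀ u ∈ M.Outs s A σ, M.sat φ u := by
  constructor
  · rintro ⟨σ, hσ, hφ, -⟩
    exact ⟨σ, hσ, hφ⟩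
  · rintro ⟨σ, hσ, hφ⟩
    obtain ⟨σB, hσB⟩ := M.exists_jointAt B s
    exact ⟨σ, hσ, hφ, σB, hσB, fun _ _ => trivial⟩

end CGM

theorem oc3_sound_general {Agt Prp : Type} (A B C : Set Agt) (φ ψ : ConStR Agt Prp)
    (M : CGM Agt Prp) (s : M.State) (h : M.sat (.oc A B φ ψ) s) :
    M.sat (.oc (A ∪ B) C (.conj φ ψ) .tru) s := by
  classical
  obtain ⟨σA, hσA, hφ, σB, hσB, hψ⟩ := h
  refine CGM.sat_oc_tru.mpr ⟨A.piecewise σA σB, hσA.union_piecewise fun a ha => hσB a ha.1, ?_⟩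
  rw [CGM.outs_union_piecewise]
  exact fun u hu => ⟨hφ u (CGM.outsAB_subset_outs hu), hψ u hu⟩

/-- **Soundness of axiom Oc 3:**
`Oc(A;B)(φ▷ψ) → Oc(A∪B;∅)((φ∧ψ)▷⊤)` is valid. -/
theorem oc3_sound {Agt Prp : Type} [Finite Agt]
    (A B : Set Agt) (φ ψ : ConStR Agt Prp)
    (M : CGM Agt Prp) (s : M.State)
    (h : M.sat (.oc A B φ ψ) s) :
    M.sat (.oc (A ∪ B) (∅ : Set Agt) (.conj φ ψ) .tru) s :=
  oc3_sound_general A B ∅ φ ψ M s h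
end
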